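/- arXiv:2111.13958 — 4 statements merged into one kernel-verified Lean document; each statement's English description precedes it below -/
import Mathlib

section
/- The negative reduced entropy is 1-strongly convex on the open reduced simplex: for an integer k ≥ 1, the function g : Δ_k → ℝ defined by g(u) = Σ_{j=1}^k u_j log(u_j) + (1 − Σ_{j=1}^k u_j) log(1 − Σ_{j=1}^k u_j) satisfies, for all u, v ∈ Δ_k and all t ∈ [0,1], g(t·u + (1−t)·v) ≤ t·g(u) + (1−t)·g(v) − (t(1−t)/2)·‖u − v‖_2². -/
open scoped BigOperators
open Finset

noncomputable section

/-- Open reduced simplex `Δ_q = {u : 0 < u_j < 1 ∀ j, Σ_j u_j < 1}`. -/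
def redSimplex (q : ℕ) : Set (EuclideanSpace ℝ (Fin q)) :=
  {u | (∀ j, 0 < u j ∧ u j < 1) ∧ ∑ j, u j < 1}

/-- Negative reduced entropy `g(u) = Σ_j u_j log u_j + (1 - Σ_j u_j) log (1 - Σ_j u_j)`. -/
def negRedEntropy {q : ℕ} (u : EuclideanSpace ℝ (Fin q)) : ℝ :=
  ∑ j, u j * Real.log (u j) + (1 - ∑ j, u j) * Real.log (1 - ∑ j, u j)

/-!
Since the second derivative `1 / x` of `x * log x` is at least `1` on `(0, 1]`, this function is
`1`-strongly convex there. Summing over orthogonal coordinates preserves the modulus, because the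
squared Euclidean distance is the sum of the squared coordinate distances. The remaining term is
`x * log x` composed with an affine function, and adding a convex function preserves the modulus.
-/

/-- The closure of the reduced simplex: nonnegative coordinates with sum at most `1`. Evaluating
`negRedEntropy` on its boundary uses `0 * log 0 = 0`, the value given by continuity. -/
def closedRedSimplex (k : ℕ) : Set (EuclideanSpace ℝ (Fin k)) :=
  {u | (∀ j, u j ∈ Set.Icc 0 1) ∧ ∑ j, u j ≤ 1}

theorem redSimplex_subset_closedRedSimplex (k : ℕ) : redSimplex k ⊆ closedRedSimplex k :=
  fun _ hu ↦ ⟨fun j ↦ ⟨(hu.1 j).1.le, (hu.1 j).2.le⟩, hu.2.le⟩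

theorem strongConvexOn_mul_log (M : ℝ) :
    StrongConvexOn (Set.Icc 0 M) M⁻¹ fun x ↦ x * Real.log x := by
  simp only [strongConvexOn_iff_convex, Real.norm_eq_abs, sq_abs]
  have hcont : Continuous fun x : ℝ ↦ x * Real.log x - M⁻¹ / 2 * x ^ 2 :=
    Real.continuous_mul_log.sub (by fun_prop)
  refine convexOn_of_hasDerivWithinAt2_nonneg (convex_Icc 0 M) hcont.continuousOn
    (f' := fun x ↦ Real.log x + 1 - M⁻¹ * x) (f'' := fun x ↦ x⁻¹ - M⁻¹) ?_ ?_ ?_ <;>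
    rw [interior_Icc] <;> rintro x ⟨hx0, hxM⟩
  · have hsq : HasDerivAt (fun x : ℝ ↦ M⁻¹ / 2 * x ^ 2) (M⁻¹ * x) x :=
      ((hasDerivAt_pow 2 x).const_mul (M⁻¹ / 2)).congr_deriv (by ring)
    exact ((Real.hasDerivAt_mul_log hx0.ne').sub hsq).hasDerivWithinAt
  · exact (((Real.hasDerivAt_log hx0.ne').add_const 1).sub
      (hasDerivAt_const_mul M⁻¹)).hasDerivWithinAt
  · exact sub_nonneg.2 (inv_anti₀ hx0 hxM.le)

theorem strongConvexOn_piLp_sum {ι : Type*} [Fintype ι] {E : ι → Type*}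
    [∀ i, NormedAddCommGroup (E i)] [∀ i, NormedSpace ℝ (E i)] {m : ℝ} {s : ∀ i, Set (E i)}
    {f : ∀ i, E i → ℝ} (hf : ∀ i, StrongConvexOn (s i) m (f i)) :
    StrongConvexOn {x : PiLp 2 E | ∀ i, x i ∈ s i} m fun x ↦ ∑ i, f i (x i) := by
  refine ⟨fun x hx y hy a b ha hb hab i ↦ (hf i).1 (hx i) (hy i) ha hb hab,
    fun x hx y hy a b ha hb hab ↦ ?_⟩
  calc ∑ i, f i (a • x i + b • y i)
      ≤ ∑ i, (a • f i (x i) + b • f i (y i) - a * b * (m / 2 * ‖x i - y i‖ ^ 2)) :=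
        sum_le_sum fun i _ ↦ (hf i).2 (hx i) (hy i) ha hb hab
    _ = a • ∑ i, f i (x i) + b • ∑ i, f i (y i) - a * b * (m / 2 * ‖x - y‖ ^ 2) := by
        simp only [PiLp.norm_sq_eq_of_L2, PiLp.sub_apply, sum_sub_distrib, sum_add_distrib,
          mul_sum, smul_sum]

theorem strongConvexOn_inter_add_convexOn {E : Type*} [NormedAddCommGroup E] [NormedSpace ℝ E]
    {s t : Set E} {m : ℝ} {f g : E → ℝ} (hf : StrongConvexOn s m f) (hg : ConvexOn ℝ t g) :
    StrongConvexOn (s ∩ t) m (f + g) := by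
  have hst : Convex ℝ (s ∩ t) := hf.1.inter hg.1
  have hf' : StrongConvexOn (s ∩ t) m f := ⟨hst, fun x hx y hy ↦ hf.2 hx.1 hy.1⟩
  have hg' : ConvexOn ℝ (s ∩ t) g := hg.subset Set.inter_subset_right hst
  simpa only [StrongConvexOn, add_zero] using hf'.add hg'.uniformConvexOn_zero

theorem convexOn_sub_mul_log_sub {E : Type*} [AddCommGroup E] [Module ℝ E] (c : ℝ)
    (ℓ : E →ₗ[ℝ] ℝ) :
    ConvexOn ℝ {x | ℓ x ≤ c} fun x ↦ (c - ℓ x) * Real.log (c - ℓ x) := by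
  simpa [Set.preimage, Function.comp_def] using
    Real.convexOn_mul_log.comp_affineMap (AffineMap.const ℝ E c - ℓ.toAffineMap)

theorem negRedEntropy_strongly_convex_general (k : ℕ) :
    StrongConvexOn (closedRedSimplex k) 1 negRedEntropy := by
  have hcoord : StrongConvexOn {u : EuclideanSpace ℝ (Fin k) | ∀ j, u j ∈ Set.Icc 0 1} 1
      fun u ↦ ∑ j, u j * Real.log (u j) :=
    strongConvexOn_piLp_sum fun _ ↦ by simpa only [inv_one] using strongConvexOn_mul_log 1
  have hrest : ConvexOn ℝ {u : EuclideanSpace ℝ (Fin k) | ∑ j, u j ≤ 1}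
      fun u ↦ (1 - ∑ j, u j) * Real.log (1 - ∑ j, u j) := by
    simpa using convexOn_sub_mul_log_sub 1
      (∑ j, (EuclideanSpace.proj j : EuclideanSpace ℝ (Fin k) →L[ℝ] ℝ).toLinearMap)
  exact strongConvexOn_inter_add_convexOn hcoord hrest

/-- **The negative reduced entropy is 1-strongly convex on the open reduced simplex**:
for `u, v ∈ Δ_k` and `t ∈ [0,1]`,
`g(t u + (1-t) v) ≤ t g(u) + (1-t) g(v) - (t(1-t)/2) ‖u - v‖₂²`. -/
theorem negRedEntropy_strongly_convex (k : ℕ) (hk : 1 ≤ k) :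
    ∀ u ∈ redSimplex k, ∀ v ∈ redSimplex k, ∀ t ∈ Set.Icc (0 : ℝ) 1,
      negRedEntropy (t • u + (1 - t) • v)
        ≤ t * negRedEntropy u + (1 - t) * negRedEntropy v
          - (t * (1 - t) / 2) * ‖u - v‖ ^ 2 := by
  have hsub := redSimplex_subset_closedRedSimplex k
  exact fun u hu v hv t ht ↦ ((negRedEntropy_strongly_convex_general k).2 (hsub hu) (hsub hv)
    ht.1 (sub_nonneg.2 ht.2) (add_sub_cancel t 1)).trans_eq (by simp only [smul_eq_mul]; ring)
end
end

section
/- (Theorem 4, case iv) Inactive half-space: let m ≥ 1, a_0, b, p ∈ ℝ^m, r > 0, c ∈ ℝ. If ⟨p, a_0⟩ − c ≤ −r‖p‖, then the ball {a ∈ ℝ^m : ‖a − a_0‖ ≤ r} is contained in the half-space {a : ⟨p, a⟩ ≤ c}, and the minimum of ⟨b, a⟩ over {a : ‖a − a_0‖ ≤ r and ⟨p, a⟩ ≤ c} equals ⟨b, a_0⟩ − r‖b‖. -/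
open scoped RealInnerProductSpace

noncomputable section

/-!
By Cauchy–Schwarz a linear functional `⟪q, ·⟫` deviates from its value at the centre of the ball
by at most `r * ‖q‖`. For `q = p` this puts the whole ball inside the half-space, so the half-space
constraint drops out; for `q = b` it bounds the objective below, with equality at the point reached
from the centre by moving a distance `r` in the direction `-b`.
-/

section InnerProductSpace

variable {E : Type*} [SeminormedAddCommGroup E] [InnerProductSpace ℝ E]
  {a₀ x p : E} {r c : ℝ}

theorem inner_le_inner_add_of_mem_closedBall (q : E) (hx : x ∈ Metric.closedBall a₀ r) :
    ⟪q, x⟫ ≤ ⟪q, a₀⟫ + r * ‖q‖ := by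
  rw [← sub_le_iff_le_add', ← inner_sub_right]
  calc ⟪q, x - a₀⟫ ≤ ‖q‖ * ‖x - a₀‖ := real_inner_le_norm q (x - a₀)
    _ ≤ ‖q‖ * r := by gcongr; exact mem_closedBall_iff_norm.mp hx
    _ = r * ‖q‖ := mul_comm _ _

theorem inner_sub_le_inner_of_mem_closedBall (q : E) (hx : x ∈ Metric.closedBall a₀ r) :
    ⟪q, a₀⟫ - r * ‖q‖ ≤ ⟪q, x⟫ := by
  have h_neg := inner_le_inner_add_of_mem_closedBall (-q) hx
  rw [inner_neg_left, inner_neg_left, norm_neg] at h_neg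
  linarith

theorem closedBall_subset_halfspace (h : ⟪p, a₀⟫ - c ≤ -(r * ‖p‖)) :
    Metric.closedBall a₀ r ⊆ {a | ⟪p, a⟫ ≤ c} := by
  intro a ha
  calc ⟪p, a⟫ ≤ ⟪p, a₀⟫ + r * ‖p‖ := inner_le_inner_add_of_mem_closedBall p ha
    _ ≤ c := by linarith

theorem norm_div_norm_smul_le (hr : 0 ≤ r) (b : E) : ‖(r / ‖b‖) • b‖ ≤ r := by
  rw [norm_smul_of_nonneg (by positivity), div_mul_eq_mul_div, mul_div_assoc]
  exact mul_le_of_le_one_right hr (div_self_le_one ‖b‖)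

theorem inner_div_norm_smul_self (r : ℝ) (b : E) : ⟪b, (r / ‖b‖) • b⟫ = r * ‖b‖ := by
  rw [real_inner_smul_right, real_inner_self_eq_norm_mul_norm, div_mul_eq_mul_div,
    mul_div_assoc, mul_self_div_self]

theorem isLeast_inner_image_closedBall (hr : 0 ≤ r) (a₀ b : E) :
    IsLeast ((fun a => ⟪b, a⟫) '' Metric.closedBall a₀ r) (⟪b, a₀⟫ - r * ‖b‖) := by
  constructor
  · -- If `‖b‖ = 0`, then `r / ‖b‖ = 0` and the witness is the centre.
    refine ⟨a₀ - (r / ‖b‖) • b, ?_, ?_⟩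
    · rw [mem_closedBall_iff_norm, sub_sub_cancel_left, norm_neg]
      exact norm_div_norm_smul_le hr b
    · simp only [inner_sub_right, inner_div_norm_smul_self]
  · rintro _ ⟨a, ha, rfl⟩
    exact inner_sub_le_inner_of_mem_closedBall b ha

theorem ball_halfspace_min_inactive_general (b : E) (hr : 0 ≤ r)
    (h : ⟪p, a₀⟫ - c ≤ -(r * ‖p‖)) :
    Metric.closedBall a₀ r ⊆ {a | ⟪p, a⟫ ≤ c} ∧
      IsLeast ((fun a => ⟪b, a⟫) '' (Metric.closedBall a₀ r ∩ {a | ⟪p, a⟫ ≤ c}))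
        (⟪b, a₀⟫ - r * ‖b‖) := by
  have h_sub : Metric.closedBall a₀ r ⊆ {a | ⟪p, a⟫ ≤ c} := closedBall_subset_halfspace h
  rw [Set.inter_eq_left.mpr h_sub]
  exact ⟨h_sub, isLeast_inner_image_closedBall hr a₀ b⟩

end InnerProductSpace

/-- **Theorem 4, case iv (inactive half-space)**: if `⟨p, a₀⟩ - c ≤ -r‖p‖`, then the ball
`{a : ‖a - a₀‖ ≤ r}` is contained in the half-space `{a : ⟨p, a⟩ ≤ c}`, and the minimum of
`⟨b, a⟩` over `{a : ‖a - a₀‖ ≤ r ∧ ⟨p, a⟩ ≤ c}` equals `⟨b, a₀⟩ - r‖b‖`. -/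
theorem ball_halfspace_min_inactive (m : ℕ) (hm : 1 ≤ m)
    (a₀ b p : EuclideanSpace ℝ (Fin m)) (r : ℝ) (hr : 0 < r) (c : ℝ)
    (h : ⟪p, a₀⟫ - c ≤ -(r * ‖p‖)) :
    {a : EuclideanSpace ℝ (Fin m) | ‖a - a₀‖ ≤ r} ⊆
      {a : EuclideanSpace ℝ (Fin m) | ⟪p, a⟫ ≤ c} ∧
    IsLeast ((fun a => ⟪b, a⟫) ''
        {a : EuclideanSpace ℝ (Fin m) | ‖a - a₀‖ ≤ r ∧ ⟪p, a⟫ ≤ c})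
      (⟪b, a₀⟫ - r * ‖b‖) := by
  simpa only [Metric.closedBall, dist_eq_norm, ← Set.ofPred_and] using
    ball_halfspace_min_inactive_general b hr.le h
end
end

section
/- (Theorem 4, case i.1) Ball minimizer feasible: let m ≥ 1, a_0, b, p ∈ ℝ^m with b ≠ 0 and p ≠ 0, r > 0, c ∈ ℝ, and set d = (⟨p, a_0⟩ − c)/(r‖p‖). If d ≤ 1 and ⟨p, b⟩ ≥ d‖p‖‖b‖, then the minimum of ⟨b, a⟩ over the set {a ∈ ℝ^m : ‖a − a_0‖ ≤ r and ⟨p, a⟩ ≤ c} equals ⟨b, a_0⟩ − r‖b‖, attained at a = a_0 − (r/‖b‖)·b. -/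
open scoped RealInnerProductSpace

noncomputable section

/-!
By Cauchy–Schwarz, `⟪b, ·⟫` is at least `⟪b, a₀⟫ - r * ‖b‖` on the ball of radius `r` about `a₀`,
with equality at `a₀ - (r / ‖b‖) • b`; this point therefore minimizes `⟪b, ·⟫` over any subset of
the ball that contains it. It lies in the half-space `⟪p, ·⟫ ≤ c` exactly when
`(⟪p, a₀⟫ - c) * ‖b‖ ≤ r * ⟪p, b⟫`, which is `d * (‖p‖ * ‖b‖) ≤ ⟪p, b⟫` with denominators cleared.
-/

section

variable {E : Type*} [SeminormedAddCommGroup E]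

theorem sub_div_norm_smul_mem_closedBall [NormedSpace ℝ E] {r : ℝ} (hr : 0 ≤ r) (a₀ b : E) :
    a₀ - (r / ‖b‖) • b ∈ Metric.closedBall a₀ r := by
  rw [mem_closedBall_iff_norm, sub_sub_cancel_left, norm_neg]
  calc ‖(r / ‖b‖) • b‖ = r / ‖b‖ * ‖b‖ := norm_smul_of_nonneg (by positivity) b
    _ = r * (‖b‖ / ‖b‖) := by ring
    _ ≤ r := mul_le_of_le_one_right hr (div_self_le_one ‖b‖)

variable [InnerProductSpace ℝ E] {a₀ b p : E} {r c : ℝ}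

theorem inner_sub_div_norm_smul_self (a₀ b : E) (r : ℝ) :
    ⟪b, a₀ - (r / ‖b‖) • b⟫ = ⟪b, a₀⟫ - r * ‖b‖ := by
  rw [inner_sub_right, real_inner_smul_right, real_inner_self_eq_norm_sq]
  field_simp

theorem inner_sub_mul_norm_le_inner_of_mem_closedBall {a : E} (ha : a ∈ Metric.closedBall a₀ r)
    (b : E) : ⟪b, a₀⟫ - r * ‖b‖ ≤ ⟪b, a⟫ := by
  rw [mem_closedBall_iff_norm'] at ha
  rw [sub_le_comm, ← inner_sub_right]
  calc ⟪b, a₀ - a⟫ ≤ ‖b‖ * ‖a₀ - a‖ := real_inner_le_norm b (a₀ - a)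
    _ ≤ ‖b‖ * r := by gcongr
    _ = r * ‖b‖ := mul_comm _ _

theorem isLeast_image_inner_of_subset_closedBall {s : Set E} (hs : s ⊆ Metric.closedBall a₀ r)
    (hmem : a₀ - (r / ‖b‖) • b ∈ s) :
    IsLeast ((fun a => ⟪b, a⟫) '' s) (⟪b, a₀⟫ - r * ‖b‖) :=
  ⟨⟨_, hmem, inner_sub_div_norm_smul_self a₀ b r⟩, Set.forall_mem_image.mpr fun _ ha =>
    inner_sub_mul_norm_le_inner_of_mem_closedBall (hs ha) b⟩

theorem inner_sub_div_norm_smul_le_iff (hb : ‖b‖ ≠ 0) :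
    ⟪p, a₀ - (r / ‖b‖) • b⟫ ≤ c ↔ (⟪p, a₀⟫ - c) * ‖b‖ ≤ r * ⟪p, b⟫ := by
  have hb_pos : 0 < ‖b‖ := (norm_nonneg b).lt_of_ne' hb
  rw [inner_sub_right, real_inner_smul_right, sub_le_comm, div_mul_eq_mul_div, le_div_iff₀ hb_pos]

theorem ball_halfspace_min_ball_feasible_general (hb : ‖b‖ ≠ 0) (hp : ‖p‖ ≠ 0) (hr : 0 < r)
    {d : ℝ} (hd : d = (⟪p, a₀⟫ - c) / (r * ‖p‖)) (hdb : d * (‖p‖ * ‖b‖) ≤ ⟪p, b⟫) :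
    IsLeast ((fun a => ⟪b, a⟫) '' {a : E | ‖a - a₀‖ ≤ r ∧ ⟪p, a⟫ ≤ c}) (⟪b, a₀⟫ - r * ‖b‖) ∧
    (a₀ - (r / ‖b‖) • b) ∈ {a : E | ‖a - a₀‖ ≤ r ∧ ⟪p, a⟫ ≤ c} ∧
    ⟪b, a₀ - (r / ‖b‖) • b⟫ = ⟪b, a₀⟫ - r * ‖b‖ := by
  have hcleared : (⟪p, a₀⟫ - c) * ‖b‖ ≤ r * ⟪p, b⟫ :=
    calc (⟪p, a₀⟫ - c) * ‖b‖ = r * (d * (‖p‖ * ‖b‖)) := by rw [hd]; field_simp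
      _ ≤ r * ⟪p, b⟫ := by gcongr
  have hmem : (a₀ - (r / ‖b‖) • b) ∈ {a : E | ‖a - a₀‖ ≤ r ∧ ⟪p, a⟫ ≤ c} :=
    ⟨mem_closedBall_iff_norm.mp (sub_div_norm_smul_mem_closedBall hr.le a₀ b),
      (inner_sub_div_norm_smul_le_iff hb).mpr hcleared⟩
  have hsub : {a : E | ‖a - a₀‖ ≤ r ∧ ⟪p, a⟫ ≤ c} ⊆ Metric.closedBall a₀ r :=
    fun _ ha => mem_closedBall_iff_norm.mpr ha.1
  exact ⟨isLeast_image_inner_of_subset_closedBall hsub hmem, hmem,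
    inner_sub_div_norm_smul_self a₀ b r⟩

end

/-- **Theorem 4, case i.1 (ball minimizer feasible)**: with `d = (⟨p, a₀⟩ - c)/(r‖p‖)`,
if `d ≤ 1` and `⟨p, b⟩ ≥ d‖p‖‖b‖`, then the minimum of `⟨b, a⟩` over
`{a : ‖a - a₀‖ ≤ r ∧ ⟨p, a⟩ ≤ c}` equals `⟨b, a₀⟩ - r‖b‖`, attained at
`a = a₀ - (r/‖b‖) b`. -/
theorem ball_halfspace_min_ball_feasible (m : ℕ) (hm : 1 ≤ m)
    (a₀ b p : EuclideanSpace ℝ (Fin m)) (hb : b ≠ 0) (hp : p ≠ 0)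
    (r : ℝ) (hr : 0 < r) (c dd : ℝ)
    (hdd : dd = (⟪p, a₀⟫ - c) / (r * ‖p‖))
    (h1 : dd ≤ 1) (h2 : dd * (‖p‖ * ‖b‖) ≤ ⟪p, b⟫) :
    IsLeast ((fun a => ⟪b, a⟫) ''
        {a : EuclideanSpace ℝ (Fin m) | ‖a - a₀‖ ≤ r ∧ ⟪p, a⟫ ≤ c})
      (⟪b, a₀⟫ - r * ‖b‖) ∧
    (a₀ - (r / ‖b‖) • b) ∈
      {a : EuclideanSpace ℝ (Fin m) | ‖a - a₀‖ ≤ r ∧ ⟪p, a⟫ ≤ c} ∧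
    ⟪b, a₀ - (r / ‖b‖) • b⟫ = ⟪b, a₀⟫ - r * ‖b‖ :=
  ball_halfspace_min_ball_feasible_general (norm_ne_zero_iff.mpr hb) (norm_ne_zero_iff.mpr hp)
    hr hdd h2
end
end

section
/- (Theorem 4, antiparallel case) Let m ≥ 1, a_0, b, p ∈ ℝ^m with b ≠ 0 and p ≠ 0, r > 0, c ∈ ℝ, and set d = (⟨p, a_0⟩ − c)/(r‖p‖). Assume ⟨p, b⟩ = −‖p‖‖b‖ (equivalently b = −(‖b‖/‖p‖)·p) and −1 ≤ d ≤ 1. Then the minimum of ⟨b, a⟩ over the set {a ∈ ℝ^m : ‖a − a_0‖ ≤ r and ⟨p, a⟩ ≤ c} equals −(‖b‖/‖p‖)·c. -/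
open scoped RealInnerProductSpace

noncomputable section

/-!
An antiparallel `b` is the nonpositive multiple `-(‖b‖ / ‖p‖) • p`, so minimising `⟪b, ·⟫` amounts
to maximising `⟪p, ·⟫`. On the half-space the latter is at most `c`, and the bound is attained in
the ball because the foot of the perpendicular from the centre to the hyperplane `⟪p, ·⟫ = c` lies
at distance `|⟪p, a₀⟫ - c| / ‖p‖ = r |d| ≤ r` from the centre.
-/

section InnerProductSpace

variable {E : Type*} [NormedAddCommGroup E] [InnerProductSpace ℝ E] {a₀ b p : E} {r c : ℝ}

theorem eq_neg_norm_div_norm_smul_of_inner_eq_neg_mul_norm (hp : p ≠ 0)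
    (hpar : ⟪p, b⟫ = -(‖p‖ * ‖b‖)) : b = -(‖b‖ / ‖p‖) • p := by
  have hinner : ⟪p, -b⟫ = ‖p‖ * ‖-b‖ := by rw [inner_neg_right, hpar, norm_neg, neg_neg]
  have hsmul : ‖b‖ • p = ‖p‖ • -b := by
    simpa only [norm_neg] using inner_eq_norm_mul_iff_real.1 hinner
  rw [neg_smul, div_eq_inv_mul, mul_smul, hsmul, inv_smul_smul₀ (norm_ne_zero_iff.2 hp), neg_neg]

theorem exists_mem_closedBall_inner_eq (hp : p ≠ 0) (hc : |⟪p, a₀⟫ - c| ≤ r * ‖p‖) :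
    ∃ a ∈ Metric.closedBall a₀ r, ⟪p, a⟫ = c := by
  have hp' : 0 < ‖p‖ := norm_pos_iff.2 hp
  refine ⟨a₀ - ((⟪p, a₀⟫ - c) / ‖p‖ ^ 2) • p, ?_, ?_⟩
  · rw [mem_closedBall_iff_norm]
    calc ‖a₀ - ((⟪p, a₀⟫ - c) / ‖p‖ ^ 2) • p - a₀‖
        = |⟪p, a₀⟫ - c| / ‖p‖ ^ 2 * ‖p‖ := by
          rw [sub_sub_cancel_left, norm_neg, norm_smul, Real.norm_eq_abs, abs_div, abs_pow,
            abs_norm]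
      _ = |⟪p, a₀⟫ - c| / ‖p‖ := by field_simp
      _ ≤ r := (div_le_iff₀ hp').2 hc
  · rw [inner_sub_right, real_inner_smul_right, real_inner_self_eq_norm_sq,
      div_mul_cancel₀ _ (pow_pos hp' 2).ne', sub_sub_cancel]

theorem isGreatest_inner_image_ball_halfspace (hp : p ≠ 0) (hc : |⟪p, a₀⟫ - c| ≤ r * ‖p‖) :
    IsGreatest ((fun a => ⟪p, a⟫) '' {a : E | ‖a - a₀‖ ≤ r ∧ ⟪p, a⟫ ≤ c}) c := by
  obtain ⟨a, ha, hac⟩ := exists_mem_closedBall_inner_eq hp hc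
  refine ⟨⟨a, ⟨mem_closedBall_iff_norm.1 ha, hac.le⟩, hac⟩, ?_⟩
  rintro _ ⟨a, ⟨-, ha⟩, rfl⟩
  exact ha

theorem ball_halfspace_min_antiparallel_general (hp : p ≠ 0)
    (hpar : ⟪p, b⟫ = -(‖p‖ * ‖b‖)) (hc : |⟪p, a₀⟫ - c| ≤ r * ‖p‖) :
    IsLeast ((fun a => ⟪b, a⟫) '' {a : E | ‖a - a₀‖ ≤ r ∧ ⟪p, a⟫ ≤ c})
      (-(‖b‖ / ‖p‖) * c) := by
  have hanti : Antitone fun t : ℝ => -(‖b‖ / ‖p‖) * t :=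
    antitone_mul_left (neg_nonpos.2 (by positivity))
  have hinner (a : E) : ⟪b, a⟫ = -(‖b‖ / ‖p‖) * ⟪p, a⟫ := by
    rw [← real_inner_smul_left, ← eq_neg_norm_div_norm_smul_of_inner_eq_neg_mul_norm hp hpar]
  simpa only [Set.image_image, ← hinner] using
    hanti.map_isGreatest (isGreatest_inner_image_ball_halfspace hp hc)

end InnerProductSpace

/-- **Theorem 4, antiparallel case**: with `d = (⟨p, a₀⟩ - c)/(r‖p‖)`, if
`⟨p, b⟩ = -‖p‖‖b‖` (equivalently `b = -(‖b‖/‖p‖) p`) and `-1 ≤ d ≤ 1`, then the minimum of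
`⟨b, a⟩` over `{a : ‖a - a₀‖ ≤ r ∧ ⟨p, a⟩ ≤ c}` equals `-(‖b‖/‖p‖) c`. -/
theorem ball_halfspace_min_antiparallel (m : ℕ) (hm : 1 ≤ m)
    (a₀ b p : EuclideanSpace ℝ (Fin m)) (hb : b ≠ 0) (hp : p ≠ 0)
    (r : ℝ) (hr : 0 < r) (c dd : ℝ)
    (hdd : dd = (⟪p, a₀⟫ - c) / (r * ‖p‖))
    (hpar : ⟪p, b⟫ = -(‖p‖ * ‖b‖)) (h1 : -1 ≤ dd) (h2 : dd ≤ 1) :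
    IsLeast ((fun a => ⟪b, a⟫) ''
        {a : EuclideanSpace ℝ (Fin m) | ‖a - a₀‖ ≤ r ∧ ⟪p, a⟫ ≤ c})
      (-(‖b‖ / ‖p‖) * c) := by
  have hrp : 0 < r * ‖p‖ := mul_pos hr (norm_pos_iff.2 hp)
  refine ball_halfspace_min_antiparallel_general hp hpar ?_
  rw [← div_le_one hrp, ← abs_of_pos hrp, ← abs_div, ← hdd]
  exact abs_le.2 ⟨h1, h2⟩
end
end
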